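/- Let -1/2 ≤ α < 1, λ > 0, and let f ∈ F(α) with Taylor expansion f(z) = z + Σ_{n=2}^∞ a_n z^n. Suppose ν is a probability measure on [0, 2π] such that f'(z) = ∫₀^{2π} (1 - e^{iθ} z)^{2α-2} dν(θ) for all z ∈ 𝔻 (principal branch of the power). Then for every integer n ≥ 2: Re(λ a_n² - a_{2n-1}) ≤ (λ A_n(α)² - 2 A_{2n-1}(α)) ∫₀^{2π} cos²((n-1)θ) dν(θ) + A_{2n-1}(α). -/

import Mathlib

open Complex MeasureTheory Metric Set Real

/-- The class `F(α)`. -/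
def zalcF (α : ℝ) : Set (ℂ → ℂ) :=
  {f | AnalyticOn ℂ f (ball 0 1) ∧ f 0 = 0 ∧ deriv f 0 = 1 ∧
       (∀ z ∈ ball (0:ℂ) 1, deriv f z ≠ 0) ∧
       (∀ z ∈ ball (0:ℂ) 1, α < (1 + z * deriv (deriv f) z / deriv f z).re)}

/-- Taylor coefficients of `f` at `0`. -/
noncomputable def zalcCoeff (f : ℂ → ℂ) (n : ℕ) : ℂ :=
  iteratedDeriv n f 0 / (Nat.factorial n : ℂ)

/-- `A_n(α) = Γ(n+1-2α)/(n! Γ(2-2α))`. -/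
noncomputable def zalcA (α : ℝ) (n : ℕ) : ℝ :=
  Real.Gamma ((n : ℝ) + 1 - 2*α) / ((Nat.factorial n : ℝ) * Real.Gamma (2 - 2*α))

/-!
Expanding the kernel under the integral sign gives `a_{k+1} = A_{k+1}(α) ∫ e^{ikθ} dν(θ)`, so that
with `k = n - 1` both `a_n` and `a_{2n-1}` are governed by the one unimodular random variable
`w = e^{ikθ}`, through its first two moments. Since `|w| = 1`, `Re w² = 2 (Re w)² - 1`, which
evaluates `Re a_{2n-1}` exactly; and `Re (∫ w)² ≤ (∫ Re w)² ≤ ∫ (Re w)²` bounds the remaining term.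
-/

open FormalMultilinearSeries
open scoped Nat Topology

theorem ring_choose_add_natCast_sub_one {a : ℂ} (ha : ∀ m : ℕ, a ≠ -m) (k : ℕ) :
    Ring.choose (a + k - 1) k = Complex.Gamma (a + k) / (k ! * Complex.Gamma a) := by
  have hpoch : k ! * Ring.choose (a + k - 1) k = (ascPochhammer ℂ k).eval a := by
    rw [← Ring.multichoose_eq, ← nsmul_eq_mul, Ring.factorial_nsmul_multichoose_eq_ascPochhammer,
      Polynomial.ascPochhammer_smeval_eq_eval]
  rw [← Complex.Gamma_add_nat_div_Gamma_eq a ha] at hpoch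
  rw [mul_comm, ← div_div, ← hpoch, mul_div_cancel_left₀ _ (Nat.cast_ne_zero.2 k.factorial_ne_zero)]

theorem hasFPowerSeriesAt_integral_comp_mul {Ω 𝕜 : Type*} [MeasurableSpace Ω] [RCLike 𝕜]
    {μ : Measure Ω} [IsFiniteMeasure μ] {u : Ω → 𝕜} (hu : AEStronglyMeasurable u μ)
    (hu_le : ∀ᵐ ω ∂μ, ‖u ω‖ ≤ 1) {g : 𝕜 → 𝕜} {c : ℕ → 𝕜}
    (hg : HasFPowerSeriesAt g (ofScalars 𝕜 c) 0) :
    HasFPowerSeriesAt (fun z => ∫ ω, g (u ω * z) ∂μ)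
      (ofScalars 𝕜 fun n => c n * ∫ ω, u ω ^ n ∂μ) 0 := by
  simp only [hasFPowerSeriesAt_iff, coeff_ofScalars, smul_eq_mul, zero_add] at hg ⊢
  obtain ⟨r, hr, hsum⟩ := Metric.eventually_nhds_iff_ball.1 hg
  filter_upwards [ball_mem_nhds 0 hr] with z hz
  have hterm (n : ℕ) :
      z ^ n * (c n * ∫ ω, u ω ^ n ∂μ) = ∫ ω, (u ω * z) ^ n * c n ∂μ := by
    simp only [mul_pow, integral_mul_const]
    ring
  simp only [hterm]
  refine hasSum_integral_of_dominated_convergence (fun n _ => ‖z ^ n * c n‖)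
    (fun n => ((hu.mul_const z).pow n).mul_const (c n)) (fun n => ?_)
    (.of_forall fun _ => (hsum z hz).summable.norm) (integrable_const _) ?_
  · filter_upwards [hu_le] with ω hω
    rw [mul_pow, mul_assoc, norm_mul, norm_pow]
    exact mul_le_of_le_one_left (norm_nonneg _) (pow_le_one₀ (norm_nonneg _) hω)
  · filter_upwards [hu_le] with ω hω
    refine hsum _ (mem_ball_zero_iff.2 ?_)
    rw [norm_mul]
    exact (mul_le_of_le_one_left (norm_nonneg z) hω).trans_lt (mem_ball_zero_iff.1 hz)

theorem zalcCoeff_succ_of_hasFPowerSeriesAt_deriv {f : ℂ → ℂ} {c : ℕ → ℂ}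
    (h : HasFPowerSeriesAt (deriv f) (ofScalars ℂ c) 0) (k : ℕ) :
    zalcCoeff f (k + 1) = c k / (k + 1) := by
  have hc : iteratedDeriv k (deriv f) 0 / k ! = c k :=
    congrFun (ofScalars_series_injective ℂ ℂ
      (h.analyticAt.hasFPowerSeriesAt.eq_formalMultilinearSeries h)) k
  rw [zalcCoeff, iteratedDeriv_succ', ← hc, div_div, Nat.factorial_succ, mul_comm (k + 1)]
  push_cast
  rfl

theorem ofReal_zalcA_succ {α : ℝ} (hα : ∀ m : ℕ, 2 - 2 * α ≠ -m) (k : ℕ) :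
    (zalcA α (k + 1) : ℂ) = Ring.choose ((2 - 2 * α : ℂ) + k - 1) k / (k + 1) := by
  rw [ring_choose_add_natCast_sub_one (by exact_mod_cast hα), zalcA, Nat.factorial_succ]
  push_cast [← Complex.Gamma_ofReal]
  rw [div_div]
  ring_nf

theorem zalcCoeff_succ_eq_mul_integral_pow {Ω : Type*} [MeasurableSpace Ω] {μ : Measure Ω}
    [IsFiniteMeasure μ] {u : Ω → ℂ} (hu : AEStronglyMeasurable u μ)
    (hu_le : ∀ᵐ ω ∂μ, ‖u ω‖ ≤ 1) {α : ℝ} (hα : ∀ m : ℕ, 2 - 2 * α ≠ -m) {f : ℂ → ℂ}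
    (hf : ∀ᶠ z in 𝓝 0, deriv f z = ∫ ω, (1 - u ω * z) ^ (2 * α - 2 : ℂ) ∂μ) (k : ℕ) :
    zalcCoeff f (k + 1) = zalcA α (k + 1) * ∫ ω, u ω ^ k ∂μ := by
  have hkernel : HasFPowerSeriesAt (fun z => (1 - z) ^ (2 * α - 2 : ℂ))
      (ofScalars ℂ fun n => Ring.choose ((2 - 2 * α : ℂ) + n - 1) n) 0 := by
    simpa only [one_div, ← Complex.cpow_neg, neg_sub] using
      (one_div_one_sub_cpow_hasFPowerSeriesOnBall_zero (2 - 2 * α)).hasFPowerSeriesAt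
  have hderiv := (hasFPowerSeriesAt_integral_comp_mul hu hu_le hkernel).congr
    (hf.mono fun _ => Eq.symm)
  rw [zalcCoeff_succ_of_hasFPowerSeriesAt_deriv hderiv, ofReal_zalcA_succ hα, mul_div_right_comm]

section Moments

variable {Ω : Type*} [MeasurableSpace Ω] {μ : Measure Ω} [IsProbabilityMeasure μ]

theorem sq_integral_le_integral_sq {X : Ω → ℝ} (hX : MemLp X 2 μ) :
    (∫ ω, X ω ∂μ) ^ 2 ≤ ∫ ω, X ω ^ 2 ∂μ :=
  sub_nonneg.1 (ProbabilityTheory.variance_eq_sub hX ▸ ProbabilityTheory.variance_nonneg X μ)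

theorem re_sq_integral_le_integral_re_sq {w : Ω → ℂ} (hw : MemLp w 2 μ) :
    ((∫ ω, w ω ∂μ) ^ 2).re ≤ ∫ ω, (w ω).re ^ 2 ∂μ :=
  calc ((∫ ω, w ω ∂μ) ^ 2).re
      ≤ (∫ ω, w ω ∂μ).re ^ 2 := by
        rw [sq, Complex.mul_re, sq]
        exact sub_le_self _ (mul_self_nonneg _)
    _ = (∫ ω, (w ω).re ∂μ) ^ 2 :=
        congrArg (· ^ 2) (reCLM.integral_comp_comm (hw.integrable one_le_two)).symm
    _ ≤ ∫ ω, (w ω).re ^ 2 ∂μ := sq_integral_le_integral_sq hw.re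

theorem re_sq_eq_of_norm_eq_one {z : ℂ} (hz : ‖z‖ = 1) : (z ^ 2).re = 2 * z.re ^ 2 - 1 := by
  have hnorm : z.re * z.re + z.im * z.im = 1 := by
    rw [← normSq_apply, normSq_eq_norm_sq, hz, one_pow]
  rw [sq, Complex.mul_re]
  linarith

theorem re_integral_sq_of_norm_eq_one {w : Ω → ℂ} (hw : AEStronglyMeasurable w μ)
    (hw_norm : ∀ᵐ ω ∂μ, ‖w ω‖ = 1) :
    (∫ ω, w ω ^ 2 ∂μ).re = 2 * (∫ ω, (w ω).re ^ 2 ∂μ) - 1 := by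
  have hre : Integrable (fun ω => (w ω).re ^ 2) μ :=
    (MemLp.of_bound hw 1 (hw_norm.mono fun _ => Eq.le)).re.integrable_sq
  have hint : Integrable (fun ω => w ω ^ 2) μ :=
    .of_bound (hw.pow 2) 1 (hw_norm.mono fun ω hω => by rw [norm_pow, hω, one_pow])
  calc (∫ ω, w ω ^ 2 ∂μ).re
      = ∫ ω, (w ω ^ 2).re ∂μ := (reCLM.integral_comp_comm hint).symm
    _ = ∫ ω, (2 * (w ω).re ^ 2 - 1) ∂μ :=
        integral_congr_ae (hw_norm.mono fun _ => re_sq_eq_of_norm_eq_one)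
    _ = 2 * (∫ ω, (w ω).re ^ 2 ∂μ) - 1 := by
        rw [integral_sub (hre.const_mul 2) (integrable_const 1),
          integral_const_mul, integral_const, probReal_univ, one_smul]

theorem re_mul_sq_integral_sub_mul_integral_sq_le {w : Ω → ℂ} (hw : AEStronglyMeasurable w μ)
    (hw_norm : ∀ᵐ ω ∂μ, ‖w ω‖ = 1) {a : ℝ} (ha : 0 ≤ a) (b : ℝ) :
    (a * (∫ ω, w ω ∂μ) ^ 2 - b * ∫ ω, w ω ^ 2 ∂μ).re ≤
      (a - 2 * b) * (∫ ω, (w ω).re ^ 2 ∂μ) + b := by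
  have hL2 : MemLp w 2 μ := .of_bound hw 1 (hw_norm.mono fun _ => Eq.le)
  rw [sub_re, re_ofReal_mul, re_ofReal_mul, re_integral_sq_of_norm_eq_one hw hw_norm]
  linarith [mul_le_mul_of_nonneg_left (re_sq_integral_le_integral_re_sq hL2) ha]

end Moments

theorem exp_ofReal_mul_I_pow_re (θ : ℝ) (k : ℕ) :
    (Complex.exp (θ * I) ^ k).re = Real.cos (k * θ) := by
  rw [← Complex.exp_nat_mul, ← mul_assoc, ← exp_ofReal_mul_I_re, ofReal_mul, ofReal_natCast]

theorem stmt_2_general {α : ℝ} (hα : ∀ m : ℕ, 2 - 2 * α ≠ -m) {lam : ℝ} (hlam : 0 ≤ lam)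
    {f : ℂ → ℂ} {ν : Measure ℝ} [IsProbabilityMeasure ν]
    (hrep : ∀ᶠ z in 𝓝 0,
        deriv f z = ∫ θ : ℝ, (1 - Complex.exp (θ * Complex.I) * z) ^ (2 * α - 2 : ℂ) ∂ν)
    {n : ℕ} (hn : n ≠ 0) :
    ((lam : ℂ) * (zalcCoeff f n) ^ 2 - zalcCoeff f (2 * n - 1)).re ≤
      (lam * (zalcA α n) ^ 2 - 2 * zalcA α (2 * n - 1)) *
        (∫ θ : ℝ, (Real.cos (((n : ℝ) - 1) * θ)) ^ 2 ∂ν) + zalcA α (2 * n - 1) := by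
  obtain ⟨k, rfl⟩ := Nat.exists_eq_succ_of_ne_zero hn
  have hmeas : AEStronglyMeasurable (fun θ : ℝ => Complex.exp (θ * I)) ν :=
    Continuous.aestronglyMeasurable (by fun_prop)
  have hcoeff := zalcCoeff_succ_eq_mul_integral_pow hmeas
    (.of_forall fun θ => (norm_exp_ofReal_mul_I θ).le) hα hrep
  have hmoments := re_mul_sq_integral_sub_mul_integral_sq_le (hmeas.pow k)
    (.of_forall fun θ => by simp [norm_exp_ofReal_mul_I])
    (mul_nonneg hlam (sq_nonneg (zalcA α (k + 1)))) (zalcA α (2 * k + 1))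
  simp only [Pi.pow_apply, exp_ofReal_mul_I_pow_re, ← pow_mul, mul_comm k 2] at hmoments
  rw [show 2 * k.succ - 1 = 2 * k + 1 by omega, hcoeff, hcoeff, Nat.cast_succ,
    add_sub_cancel_right, mul_pow, ← mul_assoc]
  exact_mod_cast hmoments

theorem stmt_2 (α : ℝ) (hα₁ : -(1/2 : ℝ) ≤ α) (hα₂ : α < 1) (lam : ℝ) (hlam : 0 < lam)
    (f : ℂ → ℂ) (hf : f ∈ zalcF α)
    (ν : Measure ℝ) (hν : IsProbabilityMeasure ν) (hνsupp : ν (Set.Icc 0 (2*π))ᶜ = 0)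
    (hrep : ∀ z ∈ ball (0:ℂ) 1,
        deriv f z = ∫ θ : ℝ, (1 - Complex.exp (θ * Complex.I) * z) ^ ((2*α - 2 : ℂ)) ∂ν)
    (n : ℕ) (hn : 2 ≤ n) :
    ((lam : ℂ) * (zalcCoeff f n)^2 - zalcCoeff f (2*n - 1)).re ≤
      (lam * (zalcA α n)^2 - 2 * zalcA α (2*n - 1)) *
        (∫ θ : ℝ, (Real.cos (((n : ℝ) - 1) * θ))^2 ∂ν) + zalcA α (2*n - 1) :=
  stmt_2_general (fun m h => by linarith [m.cast_nonneg (α := ℝ)]) hlam.le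
    (Filter.eventually_of_mem (ball_mem_nhds 0 one_pos) hrep) (by omega)
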